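/- Let s > 1, let r, q ∈ [1,∞] with r ≤ q, let ω be an s-admissible weight on ℝ^d, let f ∈ L¹(ℝ^d) have compact support, let φ be an s-cutoff, and let Γ₀ ⊂⊂ Γ be open cones in ℝ^d ∖ {0}. If (∫_Γ (|f̂(ξ)|·ω(ξ))^r dξ)^{1/r} < ∞ (essential supremum over Γ when r = ∞), then (∫_{Γ₀} (|ℱ(φf)(ξ)|·ω(ξ))^q dξ)^{1/q} < ∞ (essential supremum over Γ₀ when q = ∞). -/

import Mathlib

open MeasureTheory Complex Set
open scoped ENNReal RealInnerProductSpace NNReal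

noncomputable section

namespace Paper

variable {d : ℕ}

/-- The Fourier transform, normalized by `(2π)^{-d/2}`. -/
def FT (f : EuclideanSpace ℝ (Fin d) → ℂ) (ξ : EuclideanSpace ℝ (Fin d)) : ℂ :=
  ((2 * Real.pi) ^ (-(d : ℝ) / 2) : ℝ) *
    ∫ x, f x * Complex.exp (-(⟪x, ξ⟫ : ℝ) * Complex.I)

/-- The short-time Fourier transform `V_φ f (x, ξ)`. -/
def STFT (φ f : EuclideanSpace ℝ (Fin d) → ℂ) (x ξ : EuclideanSpace ℝ (Fin d)) : ℂ :=
  ((2 * Real.pi) ^ (-(d : ℝ) / 2) : ℝ) *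
    ∫ y, f y * (starRingEnd ℂ) (φ (y - x)) * Complex.exp (-(⟪ξ, y⟫ : ℝ) * Complex.I)

/-- A cone in `ℝ^d ∖ {0}`. -/
def IsCone (Γ : Set (EuclideanSpace ℝ (Fin d))) : Prop :=
  (0 : EuclideanSpace ℝ (Fin d)) ∉ Γ ∧ ∀ ξ ∈ Γ, ∀ t : ℝ, 0 < t → t • ξ ∈ Γ

/-- An `s`-cutoff: smooth, compactly supported, with Fourier transform decaying faster
than every `exp (-N |ξ|^{1/s})`. -/
def IsSCutoff (s : ℝ) (φ : EuclideanSpace ℝ (Fin d) → ℂ) : Prop :=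
  ContDiff ℝ (⊤ : ℕ∞) φ ∧ HasCompactSupport φ ∧
    ∀ N : ℝ, 0 < N → ∃ C : ℝ, 0 < C ∧
      ∀ ξ, ‖FT φ ξ‖ ≤ C * Real.exp (-N * ‖ξ‖ ^ (1 / s))

/-- An `s`-admissible weight: positive, measurable, and moderate with respect to an even
submultiplicative weight of sub-exponential growth of order `1/s`. -/
def IsSAdmissible (s : ℝ) (ω : EuclideanSpace ℝ (Fin d) → ℝ) : Prop :=
  Measurable ω ∧ (∀ x, 0 < ω x) ∧
    ∃ v : EuclideanSpace ℝ (Fin d) → ℝ, Measurable v ∧ (∀ x, 0 < v x) ∧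
      (∀ x, v (-x) = v x) ∧ (∀ x y, v (x + y) ≤ v x * v y) ∧
      ∃ C₀ k₀ C₁ : ℝ, 0 < C₀ ∧ 0 < k₀ ∧ 0 < C₁ ∧
        (∀ ξ, v ξ ≤ C₀ * Real.exp (k₀ * ‖ξ‖ ^ (1 / s))) ∧
        ∀ x y, ω (x + y) ≤ C₁ * v x * ω y

/-- The Fourier–Lebesgue seminorm `( ∫_Γ (|f̂| ω)^q )^{1/q}` (ess-sup when `q = ∞`). -/
def FLSemi (ω : EuclideanSpace ℝ (Fin d) → ℝ) (q : ℝ≥0∞)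
    (f : EuclideanSpace ℝ (Fin d) → ℂ) (Γ : Set (EuclideanSpace ℝ (Fin d))) : ℝ≥0∞ :=
  eLpNorm (fun ξ => ‖FT f ξ‖ * ω ξ) q (volume.restrict Γ)

/-- The Fourier–Lebesgue wave-front set `WF_{FL^q_ω} f`. -/
def WF_FL (s : ℝ) (q : ℝ≥0∞) (ω : EuclideanSpace ℝ (Fin d) → ℝ)
    (f : EuclideanSpace ℝ (Fin d) → ℂ) :
    Set (EuclideanSpace ℝ (Fin d) × EuclideanSpace ℝ (Fin d)) :=
  {z | z.2 ≠ 0 ∧ ∀ φ : EuclideanSpace ℝ (Fin d) → ℂ, IsSCutoff s φ → φ z.1 ≠ 0 →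
    ∀ Γ : Set (EuclideanSpace ℝ (Fin d)), IsOpen Γ → IsCone Γ → z.2 ∈ Γ →
      FLSemi ω q (fun x => φ x * f x) Γ = ∞}

/-- The `s`-wave-front set `WF_s f`. -/
def WFs (s : ℝ) (f : EuclideanSpace ℝ (Fin d) → ℂ) :
    Set (EuclideanSpace ℝ (Fin d) × EuclideanSpace ℝ (Fin d)) :=
  {z | z.2 ≠ 0 ∧ ¬ ∃ φ : EuclideanSpace ℝ (Fin d) → ℂ, IsSCutoff s φ ∧
    (∃ U : Set (EuclideanSpace ℝ (Fin d)), IsOpen U ∧ z.1 ∈ U ∧ ∀ x ∈ U, φ x = 1) ∧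
    ∃ Γ : Set (EuclideanSpace ℝ (Fin d)), IsOpen Γ ∧ IsCone Γ ∧ z.2 ∈ Γ ∧
      ∃ C k : ℝ, 0 < C ∧ 0 < k ∧
        ∀ ξ ∈ Γ, ‖FT (fun x => φ x * f x) ξ‖ ≤ C * Real.exp (-k * ‖ξ‖ ^ (1 / s))}

/-- The mixed modulation-space seminorm
`( ∫_Γ ( ∫ |V_g F(x,ξ)|^p dx )^{q/p} ω(ξ)^q dξ )^{1/q}` with the usual
ess-sup interpretations for `p = ∞` or `q = ∞`. -/
def ModSemi (g F : EuclideanSpace ℝ (Fin d) → ℂ) (ω : EuclideanSpace ℝ (Fin d) → ℝ)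
    (p q : ℝ≥0∞) (Γ : Set (EuclideanSpace ℝ (Fin d))) : ℝ≥0∞ :=
  if q = ∞ then
    essSup (fun ξ => eLpNorm (fun x => STFT g F x ξ) p volume * ENNReal.ofReal (ω ξ))
      (volume.restrict Γ)
  else
    (∫⁻ ξ in Γ, (eLpNorm (fun x => STFT g F x ξ) p volume * ENNReal.ofReal (ω ξ)) ^ q.toReal) ^
      (1 / q.toReal)

/-- The modulation wave-front set `WF_{M^{p,q}_ω} f`, with window `g`. -/
def WF_M (s : ℝ) (p q : ℝ≥0∞) (ω : EuclideanSpace ℝ (Fin d) → ℝ)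
    (g f : EuclideanSpace ℝ (Fin d) → ℂ) :
    Set (EuclideanSpace ℝ (Fin d) × EuclideanSpace ℝ (Fin d)) :=
  {z | z.2 ≠ 0 ∧ ∀ φ : EuclideanSpace ℝ (Fin d) → ℂ, IsSCutoff s φ → φ z.1 ≠ 0 →
    ∀ Γ : Set (EuclideanSpace ℝ (Fin d)), IsOpen Γ → IsCone Γ → z.2 ∈ Γ →
      ModSemi g (fun x => φ x * f x) ω p q Γ = ∞}

/-- Reinterpret a plain vector as a point of Euclidean space. -/
def toE (x : Fin d → ℝ) : EuclideanSpace ℝ (Fin d) :=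
  (EuclideanSpace.equiv (Fin d) ℝ).symm x

/-- The point `A k` of the lattice `A(ℤ^d)`. -/
def latPt (A : Matrix (Fin d) (Fin d) ℝ) (k : Fin d → ℤ) : EuclideanSpace ℝ (Fin d) :=
  toE (A.mulVec fun i => (k i : ℝ))

/-- The point `c (Aᵀ)⁻¹ k` of the dual lattice `c (Aᵀ)⁻¹(ℤ^d)`. -/
def dualLatPt (A : Matrix (Fin d) (Fin d) ℝ) (c : ℝ) (k : Fin d → ℤ) :
    EuclideanSpace ℝ (Fin d) :=
  toE (c • (A.transpose⁻¹.mulVec fun i => (k i : ℝ)))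

/-- The parallelepiped `x₁ + A([0,1]^d)`. -/
def lattPara (A : Matrix (Fin d) (Fin d) ℝ) (x₁ : EuclideanSpace ℝ (Fin d)) :
    Set (EuclideanSpace ℝ (Fin d)) :=
  (fun t : Fin d → ℝ => x₁ + toE (A.mulVec t)) '' (Set.univ.pi fun _ => Set.Icc 0 1)

/-- The adjoint short-time Fourier transform `V*_φ F`. -/
def VStar (φ : EuclideanSpace ℝ (Fin d) → ℂ)
    (F : EuclideanSpace ℝ (Fin d) × EuclideanSpace ℝ (Fin d) → ℂ)
    (t : EuclideanSpace ℝ (Fin d)) : ℂ :=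
  ((2 * Real.pi) ^ (-(d : ℝ) / 2) : ℝ) *
    ∫ z : EuclideanSpace ℝ (Fin d) × EuclideanSpace ℝ (Fin d),
      F z * Complex.exp ((⟪z.2, t⟫ : ℝ) * Complex.I) * φ (t - z.1)

/-!
Up to a constant, `FT (φ f)` is the convolution of `FT φ` with `FT f`. Bound this convolution at
`ξ ∈ Γ₀`, multiplied by `ω ξ`, by splitting the variable `η` of `FT φ` according to whether
`ζ = ξ - η` lies in `Γ`.

If `ζ ∈ Γ`, moderateness `ω (η + ζ) ≲ exp (k |η|^{1/s}) ω ζ` moves the weight onto `FT f`, and the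
decay of `FT φ` absorbs the exponential: what remains is the convolution of a function in `L¹ ∩ L^∞`
with a function in `L^r`, which lies in `L^q` for every `q ≥ r` by Young's inequality.

If `ζ ∉ Γ`, compactness of the unit sphere gives `δ |ξ| ≤ |η|` for a fixed `δ > 0`, so that the
decay of `FT φ` at `η` beats the growth of `ω` at `ξ`; since `FT f` is bounded, this part is
`O(exp (-|ξ|^{1/s}))`.
-/

section LpSeminorm

variable {α ε : Type*} [MeasurableSpace α] {μ : Measure α} [ENorm ε] {F : α → ε} {r q : ℝ≥0∞}

lemma eLpNorm_lt_top_of_exponent_le_of_eLpNorm_top (hr : r ≠ 0) (hrq : r ≤ q)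
    (hFr : eLpNorm F r μ < ∞) (hF_top : eLpNorm F ∞ μ < ∞) : eLpNorm F q μ < ∞ := by
  rcases eq_or_ne q ∞ with rfl | hq
  · exact hF_top
  have hr_top : r ≠ ∞ := (hrq.trans_lt hq.lt_top).ne
  have hq₀ : q ≠ 0 := (hr.bot_lt.trans_le hrq).ne'
  have h_exp : 0 ≤ q.toReal - r.toReal := sub_nonneg.2 (ENNReal.toReal_mono hq hrq)
  rw [eLpNorm_lt_top_iff_lintegral_rpow_enorm_lt_top hr hr_top] at hFr
  rw [eLpNorm_lt_top_iff_lintegral_rpow_enorm_lt_top hq₀ hq]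
  set M := eLpNorm F ∞ μ
  have hM : M ^ (q.toReal - r.toReal) ≠ ∞ := ENNReal.rpow_ne_top_of_nonneg h_exp hF_top.ne
  have h_bound : ∀ᵐ x ∂μ, ‖F x‖ₑ ≤ M := by
    simpa only [M, eLpNorm_exponent_top] using enorm_ae_le_eLpNormEssSup F μ
  calc ∫⁻ x, ‖F x‖ₑ ^ q.toReal ∂μ
      ≤ ∫⁻ x, M ^ (q.toReal - r.toReal) * ‖F x‖ₑ ^ r.toReal ∂μ := by
        refine lintegral_mono_ae (h_bound.mono fun x hx => ?_)
        calc ‖F x‖ₑ ^ q.toReal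
            = ‖F x‖ₑ ^ (q.toReal - r.toReal) * ‖F x‖ₑ ^ r.toReal := by
              rw [← ENNReal.rpow_add_of_nonneg _ _ h_exp ENNReal.toReal_nonneg, sub_add_cancel]
          _ ≤ M ^ (q.toReal - r.toReal) * ‖F x‖ₑ ^ r.toReal := by gcongr
    _ = M ^ (q.toReal - r.toReal) * ∫⁻ x, ‖F x‖ₑ ^ r.toReal ∂μ := lintegral_const_mul' _ _ hM
    _ < ∞ := ENNReal.mul_lt_top hM.lt_top hFr

lemma eLpNorm_restrict_lt_top_of_le_mul_add {F₁ F₂ F₃ : α → ℝ≥0∞} {S : Set α} {A B : ℝ≥0∞}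
    (hq : 1 ≤ q) (hF₁ : Measurable F₁) (hF₂ : Measurable F₂) (hF₃ : Measurable F₃)
    (hA : A ≠ ∞) (hB : B ≠ ∞) (h_le : ∀ x ∈ S, F₁ x ≤ A * (F₂ x + B * F₃ x))
    (hF₂q : eLpNorm F₂ q μ < ∞) (hF₃q : eLpNorm F₃ q μ < ∞) :
    eLpNorm F₁ q (μ.restrict S) < ∞ := by
  have h_ae : ∀ᵐ x ∂μ.restrict S, ‖F₁ x‖ₑ ≤ A * ‖(F₂ + fun x => B * F₃ x) x‖ₑ :=
    (ae_restrict_iff (measurableSet_le (by fun_prop) (by fun_prop))).2 (.of_forall h_le)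
  calc eLpNorm F₁ q (μ.restrict S)
      ≤ A * eLpNorm (F₂ + fun x => B * F₃ x) q (μ.restrict S) :=
        eLpNorm_le_mul_eLpNorm_of_ae_le_mul'' _ (by fun_prop) h_ae
    _ ≤ A * eLpNorm (F₂ + fun x => B * F₃ x) q μ := by
        gcongr
        exact Measure.restrict_le_self
    _ ≤ A * (eLpNorm F₂ q μ + eLpNorm (fun x => B * F₃ x) q μ) := by
        gcongr
        exact eLpNorm_add_le (by fun_prop) (by fun_prop) hq
    _ ≤ A * (eLpNorm F₂ q μ + B * eLpNorm F₃ q μ) := by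
        gcongr
        exact eLpNorm_le_mul_eLpNorm_of_ae_le_mul'' _ (by fun_prop) (.of_forall fun _ => le_rfl)
    _ < ∞ := by finiteness

end LpSeminorm

section Convolution

lemma rpow_lintegral_mul_le {α : Type*} [MeasurableSpace α] {μ : Measure α} {K H : α → ℝ≥0∞}
    (hK : AEMeasurable K μ) (hH : AEMeasurable H μ) {p : ℝ} (hp : 1 ≤ p) :
    (∫⁻ x, K x * H x ∂μ) ^ p ≤ (∫⁻ x, K x ∂μ) ^ (p - 1) * ∫⁻ x, K x * H x ^ p ∂μ := by
  have hp₀ : 0 < p := one_pos.trans_le hp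
  have hp_inv : 0 ≤ 1 - p⁻¹ := sub_nonneg.2 (inv_le_one_of_one_le₀ hp)
  have h_split : ∀ x, K x * H x = K x ^ (1 - p⁻¹) * (K x * H x ^ p) ^ p⁻¹ := fun x => by
    rw [ENNReal.mul_rpow_of_nonneg _ _ (inv_nonneg.2 hp₀.le), ← ENNReal.rpow_mul,
      mul_inv_cancel₀ hp₀.ne', ENNReal.rpow_one, ← mul_assoc,
      ← ENNReal.rpow_add_of_nonneg _ _ hp_inv (inv_nonneg.2 hp₀.le), sub_add_cancel,
      ENNReal.rpow_one]
  have h_holder : ∫⁻ x, K x * H x ∂μ ≤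
      (∫⁻ x, K x ∂μ) ^ (1 - p⁻¹) * (∫⁻ x, K x * H x ^ p ∂μ) ^ p⁻¹ := by
    simp_rw [h_split]
    exact ENNReal.lintegral_mul_norm_pow_le hK (hK.mul (hH.pow_const p)) hp_inv
      (inv_nonneg.2 hp₀.le) (sub_add_cancel _ _)
  calc (∫⁻ x, K x * H x ∂μ) ^ p
      ≤ ((∫⁻ x, K x ∂μ) ^ (1 - p⁻¹) * (∫⁻ x, K x * H x ^ p ∂μ) ^ p⁻¹) ^ p := by gcongr
    _ = (∫⁻ x, K x ∂μ) ^ (p - 1) * ∫⁻ x, K x * H x ^ p ∂μ := by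
        rw [ENNReal.mul_rpow_of_nonneg _ _ hp₀.le, ← ENNReal.rpow_mul, ← ENNReal.rpow_mul,
          sub_mul, one_mul, inv_mul_cancel₀ hp₀.ne', ENNReal.rpow_one]

variable {G : Type*} [MeasurableSpace G] [AddCommGroup G] [MeasurableAdd₂ G] [MeasurableNeg G]
  {μ : Measure G} [μ.IsAddLeftInvariant] {K H : G → ℝ≥0∞}

lemma lconvolution_le_lintegral_mul_eLpNorm_top [μ.IsNegInvariant] (hK : AEMeasurable K μ)
    (x : G) : (K ⋆ₗ[μ] H) x ≤ (∫⁻ y, K y ∂μ) * eLpNorm H ∞ μ := by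
  have h_bound : ∀ᵐ y ∂μ, H (-y + x) ≤ eLpNorm H ∞ μ := by
    have h_qmp : Measure.QuasiMeasurePreserving (fun y => -y + x) μ μ := by
      simpa only [sub_eq_neg_add] using
        (Measure.measurePreserving_sub_left μ x).quasiMeasurePreserving
    simpa only [eLpNorm_exponent_top, enorm_eq_self] using
      h_qmp.ae (enorm_ae_le_eLpNormEssSup H μ)
  calc (K ⋆ₗ[μ] H) x ≤ ∫⁻ y, K y * eLpNorm H ∞ μ ∂μ :=
        lintegral_mono_ae (h_bound.mono fun y hy => by gcongr)
    _ = (∫⁻ y, K y ∂μ) * eLpNorm H ∞ μ := lintegral_mul_const'' _ hK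

variable [SFinite μ]

lemma lintegral_lconvolution (hK : AEMeasurable K μ) (hH : AEMeasurable H μ) :
    ∫⁻ x, (K ⋆ₗ[μ] H) x ∂μ = (∫⁻ x, K x ∂μ) * ∫⁻ x, H x ∂μ := by
  calc ∫⁻ x, (K ⋆ₗ[μ] H) x ∂μ = ∫⁻ y, ∫⁻ x, K y * H (-y + x) ∂μ ∂μ := by
        simp_rw [lconvolution_def]
        exact lintegral_lintegral_swap (by fun_prop)
    _ = ∫⁻ y, K y * ∫⁻ x, H x ∂μ ∂μ := by
        refine lintegral_congr fun y => ?_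
        rw [lintegral_const_mul'' _ (by fun_prop), lintegral_add_left_eq_self H]
    _ = (∫⁻ x, K x ∂μ) * ∫⁻ x, H x ∂μ := lintegral_mul_const'' _ hK

variable [μ.IsNegInvariant] {r q : ℝ≥0∞}

lemma eLpNorm_lconvolution_lt_top (hr : 1 ≤ r) (hrq : r ≤ q)
    (hK : AEMeasurable K μ) (hH : AEMeasurable H μ) (hK_int : ∫⁻ x, K x ∂μ < ∞)
    (hK_top : eLpNorm K ∞ μ < ∞) (hHr : eLpNorm H r μ < ∞) :
    eLpNorm (K ⋆ₗ[μ] H) q μ < ∞ := by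
  rcases eq_or_ne r ∞ with rfl | hr_top
  · obtain rfl : q = ∞ := top_le_iff.1 hrq
    exact (eLpNormEssSup_le_of_ae_enorm_bound
      (.of_forall (lconvolution_le_lintegral_mul_eLpNorm_top hK))).trans_lt
      (ENNReal.mul_lt_top hK_int hHr)
  have hr₀ : r ≠ 0 := (one_pos.trans_le hr).ne'
  have hr_real : 1 ≤ r.toReal := ENNReal.toReal_mono hr_top hr
  have hr_pos : 0 < r.toReal := one_pos.trans_le hr_real
  set J := ∫⁻ x, H x ^ r.toReal ∂μ
  have hJ : J < ∞ := (eLpNorm_lt_top_iff_lintegral_rpow_enorm_lt_top hr₀ hr_top).1 hHr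
  have hκ : (∫⁻ x, K x ∂μ) ^ (r.toReal - 1) < ∞ :=
    ENNReal.rpow_lt_top_of_nonneg (sub_nonneg.2 hr_real) hK_int.ne
  have h_jensen : ∀ x, (K ⋆ₗ[μ] H) x ^ r.toReal ≤
      (∫⁻ x, K x ∂μ) ^ (r.toReal - 1) * (K ⋆ₗ[μ] fun y => H y ^ r.toReal) x := fun x =>
    rpow_lintegral_mul_le hK (by fun_prop) hr_real
  refine eLpNorm_lt_top_of_exponent_le_of_eLpNorm_top hr₀ hrq ?_ ?_
  · rw [eLpNorm_lt_top_iff_lintegral_rpow_enorm_lt_top hr₀ hr_top]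
    calc ∫⁻ x, (K ⋆ₗ[μ] H) x ^ r.toReal ∂μ
        ≤ ∫⁻ x, (∫⁻ x, K x ∂μ) ^ (r.toReal - 1) * (K ⋆ₗ[μ] fun y => H y ^ r.toReal) x ∂μ :=
          lintegral_mono h_jensen
      _ = (∫⁻ x, K x ∂μ) ^ (r.toReal - 1) * ((∫⁻ x, K x ∂μ) * J) := by
          rw [lintegral_const_mul' _ _ hκ.ne, lintegral_lconvolution hK (by fun_prop)]
      _ < ∞ := ENNReal.mul_lt_top hκ (ENNReal.mul_lt_top hK_int hJ)
  · have h_bound : ∀ x, (K ⋆ₗ[μ] H) x ≤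
        ((∫⁻ x, K x ∂μ) ^ (r.toReal - 1) * (J * eLpNorm K ∞ μ)) ^ r.toReal⁻¹ := fun x => by
      rw [ENNReal.le_rpow_inv_iff hr_pos]
      refine (h_jensen x).trans ?_
      rw [lconvolution_comm]
      gcongr
      exact lconvolution_le_lintegral_mul_eLpNorm_top (by fun_prop) x
    exact (eLpNormEssSup_le_of_ae_enorm_bound (.of_forall h_bound)).trans_lt
      (ENNReal.rpow_lt_top_of_nonneg (inv_nonneg.2 hr_pos.le)
        (ENNReal.mul_lt_top hκ (ENNReal.mul_lt_top hJ hK_top)).ne)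

end Convolution

section Cone

variable {E : Type*} [NormedAddCommGroup E] [NormedSpace ℝ E] [ProperSpace E]

lemma exists_mul_norm_le_norm_sub_of_closure_diff_subset {Γ₀ Γ : Set E}
    (hΓ₀ : ∀ ξ ∈ Γ₀, ∀ t : ℝ, 0 < t → t • ξ ∈ Γ₀)
    (hΓ : ∀ ξ ∈ Γ, ∀ t : ℝ, 0 < t → t • ξ ∈ Γ) (hΓo : IsOpen Γ)
    (hsub : closure Γ₀ \ {0} ⊆ Γ) :
    ∃ δ : ℝ, 0 < δ ∧ ∀ ξ ∈ Γ₀, ∀ ζ ∉ Γ, δ * ‖ξ‖ ≤ ‖ξ - ζ‖ := by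
  have h_compact : IsCompact (closure Γ₀ ∩ Metric.sphere 0 1) :=
    (isCompact_sphere 0 1).inter_left isClosed_closure
  have h_subset : closure Γ₀ ∩ Metric.sphere 0 1 ⊆ Γ := fun x hx =>
    hsub ⟨hx.1, ne_zero_of_mem_unit_sphere ⟨x, hx.2⟩⟩
  obtain ⟨δ, hδ, h_thickening⟩ := h_compact.exists_thickening_subset_open hΓo h_subset
  refine ⟨δ, hδ, fun ξ hξ ζ hζ => ?_⟩
  contrapose! hζ
  have hξ_pos : 0 < ‖ξ‖ := norm_pos_iff.2 fun h => by
    simp only [h, norm_zero, mul_zero] at hζ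
    exact (norm_nonneg _).not_gt hζ
  have h_unit : ‖ξ‖⁻¹ • ξ ∈ closure Γ₀ ∩ Metric.sphere 0 1 :=
    ⟨subset_closure (hΓ₀ ξ hξ _ (inv_pos.2 hξ_pos)), by simp [norm_smul, hξ_pos.ne']⟩
  have h_near : dist (‖ξ‖⁻¹ • ζ) (‖ξ‖⁻¹ • ξ) < δ := by
    rwa [dist_comm, dist_eq_norm, ← smul_sub, norm_smul, norm_inv, norm_norm,
      inv_mul_lt_iff₀ hξ_pos, mul_comm]
  have h_scaled : ‖ξ‖⁻¹ • ζ ∈ Γ :=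
    h_thickening (Metric.mem_thickening_iff.2 ⟨_, h_unit, h_near⟩)
  simpa only [smul_inv_smul₀ hξ_pos.ne'] using hΓ _ h_scaled ‖ξ‖ hξ_pos

end Cone

section SubexponentialWeight

variable {E : Type*} [NormedAddCommGroup E] {p a : ℝ}

/-- The radial weight `exp (a |x|^p)` with values in `[0, ∞]`; with `p = 1 / s` it measures the
decay of `s`-cutoffs and the growth of `s`-admissible weights. -/
def expNormRpow (p a : ℝ) (x : E) : ℝ≥0∞ := ENNReal.ofReal (Real.exp (a * ‖x‖ ^ p))

lemma expNormRpow_mul_le_mul {b a' b' : ℝ} {x y : E}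
    (h : a * ‖x‖ ^ p + b * ‖y‖ ^ p ≤ a' * ‖x‖ ^ p + b' * ‖y‖ ^ p) :
    expNormRpow p a x * expNormRpow p b y ≤ expNormRpow p a' x * expNormRpow p b' y := by
  simp only [expNormRpow, ← ENNReal.ofReal_mul (Real.exp_pos _).le, ← Real.exp_add]
  exact ENNReal.ofReal_le_ofReal (Real.exp_le_exp.2 h)

lemma expNormRpow_mul_le_of_add_le {b c : ℝ} (h : a + b ≤ c) (x : E) :
    expNormRpow p a x * expNormRpow p b x ≤ expNormRpow p c x := by
  rw [expNormRpow, expNormRpow, ← ENNReal.ofReal_mul (Real.exp_pos _).le, ← Real.exp_add,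
    ← add_mul]
  exact ENNReal.ofReal_le_ofReal (Real.exp_le_exp.2 (by gcongr))

lemma enorm_le_mul_expNormRpow {F : Type*} [SeminormedAddGroup F] {C : ℝ} {x : E} {y : F}
    (h : ‖y‖ ≤ C * Real.exp (a * ‖x‖ ^ p)) : ‖y‖ₑ ≤ ENNReal.ofReal C * expNormRpow p a x := by
  rw [expNormRpow, ← ENNReal.ofReal_mul' (Real.exp_pos _).le, ← ofReal_norm]
  exact ENNReal.ofReal_le_ofReal h

lemma continuous_exp_mul_norm_rpow (hp : 0 ≤ p) :
    Continuous fun x : E => Real.exp (a * ‖x‖ ^ p) :=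
  Real.continuous_exp.comp
    (continuous_const.mul (continuous_norm.rpow_const fun _ => Or.inr hp))

variable [MeasurableSpace E] {μ : Measure E}

lemma eLpNorm_top_expNormRpow_lt_top (ha : a ≤ 0) :
    eLpNorm (expNormRpow p a : E → ℝ≥0∞) ∞ μ < ∞ := by
  have h_le_one : ∀ x : E, expNormRpow p a x ≤ 1 := fun x =>
    ENNReal.ofReal_le_one.2
      (Real.exp_le_one_iff.2 (mul_nonpos_of_nonpos_of_nonneg ha (by positivity)))
  exact (eLpNormEssSup_le_of_ae_enorm_bound (.of_forall h_le_one)).trans_lt ENNReal.one_lt_top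

variable [BorelSpace E]

lemma measurable_expNormRpow : Measurable (expNormRpow p a : E → ℝ≥0∞) := by
  unfold expNormRpow
  fun_prop

variable [NormedSpace ℝ E] [FiniteDimensional ℝ E] [μ.IsAddHaarMeasure]

lemma integrable_exp_neg_mul_norm_rpow (ha : 0 < a) (hp : 0 < p) :
    Integrable (fun x : E => Real.exp (-a * ‖x‖ ^ p)) μ := by
  rcases subsingleton_or_nontrivial E with hE | hE
  · exact (continuous_exp_mul_norm_rpow hp.le).integrable_of_hasCompactSupport
      (HasCompactSupport.of_compactSpace _)
  · rw [integrable_fun_norm_addHaar μ (f := fun t => Real.exp (-a * t ^ p))]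
    simpa using integrableOn_rpow_mul_exp_neg_mul_rpow (s := (Module.finrank ℝ E - 1 : ℕ))
      (neg_one_lt_zero.trans_le (Nat.cast_nonneg _)) hp ha

lemma lintegral_expNormRpow_neg_lt_top (ha : 0 < a) (hp : 0 < p) :
    ∫⁻ x, expNormRpow p (-a) x ∂μ < ∞ :=
  (integrable_exp_neg_mul_norm_rpow ha hp).lintegral_lt_top

lemma eLpNorm_expNormRpow_neg_lt_top {q : ℝ≥0∞} (hq : 1 ≤ q) (ha : 0 < a) (hp : 0 < p) :
    eLpNorm (expNormRpow p (-a) : E → ℝ≥0∞) q μ < ∞ :=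
  eLpNorm_lt_top_of_exponent_le_of_eLpNorm_top one_ne_zero hq
    (by simpa only [eLpNorm_one_eq_lintegral_enorm, enorm_eq_self] using
      lintegral_expNormRpow_neg_lt_top ha hp)
    (eLpNorm_top_expNormRpow_lt_top (neg_nonpos.2 ha.le))

end SubexponentialWeight

section WeightedConvolution

variable {E : Type*} [NormedAddCommGroup E] {p k δ N : ℝ} {C D M : ℝ≥0∞} {g u w : E → ℝ≥0∞}
  {Γ₀ Γ : Set E}

lemma expNormRpow_mul_le_of_mul_norm_le {ξ η : E} (hp : 0 ≤ p) (hk : 0 ≤ k) (hδ : 0 < δ)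
    (hN : (k + 1) / δ ^ p ≤ N - 1) (h : δ * ‖ξ‖ ≤ ‖η‖) :
    expNormRpow p (-N) η * expNormRpow p k ξ ≤
      expNormRpow p (-1) η * expNormRpow p (-1) ξ := by
  refine expNormRpow_mul_le_mul ?_
  have h_rpow : δ ^ p * ‖ξ‖ ^ p ≤ ‖η‖ ^ p := by
    rw [← Real.mul_rpow hδ.le (norm_nonneg ξ)]
    gcongr
  have h_decay : (k + 1) * ‖ξ‖ ^ p ≤ (N - 1) * ‖η‖ ^ p := calc
    (k + 1) * ‖ξ‖ ^ p = (k + 1) / δ ^ p * (δ ^ p * ‖ξ‖ ^ p) := by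
      rw [← mul_assoc, div_mul_cancel₀ _ (Real.rpow_pos_of_pos hδ p).ne']
    _ ≤ (N - 1) * ‖η‖ ^ p := by
      have h_quot : 0 ≤ (k + 1) / δ ^ p := by positivity
      gcongr
      exact h_quot.trans hN
  linarith

lemma lconvolution_integrand_mul_weight_le (hp : 0 ≤ p) (hk : 0 ≤ k) (hδ : 0 < δ)
    (hkN : k + 1 ≤ N) (hδN : (k + 1) / δ ^ p ≤ N - 1)
    (hw : ∀ x y, w (x + y) ≤ C * expNormRpow p k x * w y)
    (hg : ∀ η, g η ≤ D * expNormRpow p (-N) η) (hu : ∀ ζ, u ζ ≤ M)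
    (hgap : ∀ ξ ∈ Γ₀, ∀ ζ ∉ Γ, δ * ‖ξ‖ ≤ ‖ξ - ζ‖) {ξ : E} (hξ : ξ ∈ Γ₀) (η : E) :
    g η * u (-η + ξ) * w ξ ≤ D * C * (expNormRpow p (-1) η *
      (Γ.indicator (fun ζ => u ζ * w ζ) (-η + ξ) + M * w 0 * expNormRpow p (-1) ξ)) := by
  by_cases hζ : -η + ξ ∈ Γ
  · have h_weight : w ξ ≤ C * expNormRpow p k η * w (-η + ξ) := by
      simpa only [add_neg_cancel_left] using hw η (-η + ξ)
    calc g η * u (-η + ξ) * w ξ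
        ≤ D * expNormRpow p (-N) η * u (-η + ξ) * (C * expNormRpow p k η * w (-η + ξ)) := by
          gcongr
          exact hg η
      _ = D * C * (expNormRpow p (-N) η * expNormRpow p k η * (u (-η + ξ) * w (-η + ξ))) := by
          ring
      _ ≤ D * C * (expNormRpow p (-1) η *
            (Γ.indicator (fun ζ => u ζ * w ζ) (-η + ξ) + M * w 0 * expNormRpow p (-1) ξ)) := by
          rw [indicator_of_mem hζ]
          gcongr
          · exact expNormRpow_mul_le_of_add_le (by linarith) η
          · exact le_self_add
  · have h_gap : δ * ‖ξ‖ ≤ ‖η‖ := by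
      simpa only [neg_add_eq_sub, sub_sub_cancel] using hgap ξ hξ _ hζ
    have h_weight : w ξ ≤ C * expNormRpow p k ξ * w 0 := by
      simpa only [add_zero] using hw ξ 0
    calc g η * u (-η + ξ) * w ξ
        ≤ D * expNormRpow p (-N) η * M * (C * expNormRpow p k ξ * w 0) := by
          gcongr
          exacts [hg η, hu _]
      _ = D * C * (expNormRpow p (-N) η * expNormRpow p k ξ * (M * w 0)) := by ring
      _ ≤ D * C * (expNormRpow p (-1) η * expNormRpow p (-1) ξ * (M * w 0)) := by
          gcongr D * C * (?_ * _)
          exact expNormRpow_mul_le_of_mul_norm_le hp hk hδ hδN h_gap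
      _ = D * C * (expNormRpow p (-1) η *
            (Γ.indicator (fun ζ => u ζ * w ζ) (-η + ξ) + M * w 0 * expNormRpow p (-1) ξ)) := by
          rw [indicator_of_notMem hζ]
          ring

variable [MeasurableSpace E] [BorelSpace E] {μ : Measure E}

lemma lconvolution_mul_weight_le (hp : 0 ≤ p) (hk : 0 ≤ k) (hδ : 0 < δ)
    (hkN : k + 1 ≤ N) (hδN : (k + 1) / δ ^ p ≤ N - 1) (hw0 : w 0 ≠ ∞)
    (hw : ∀ x y, w (x + y) ≤ C * expNormRpow p k x * w y) (hC : C ≠ ∞)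
    (hg : ∀ η, g η ≤ D * expNormRpow p (-N) η) (hD : D ≠ ∞) (hu : ∀ ζ, u ζ ≤ M)
    (hgap : ∀ ξ ∈ Γ₀, ∀ ζ ∉ Γ, δ * ‖ξ‖ ≤ ‖ξ - ζ‖) {ξ : E} (hξ : ξ ∈ Γ₀) :
    (g ⋆ₗ[μ] u) ξ * w ξ ≤ D * C *
      ((expNormRpow p (-1) ⋆ₗ[μ] Γ.indicator fun ζ => u ζ * w ζ) ξ +
        (∫⁻ η, expNormRpow p (-1) η ∂μ) * (M * w 0) * expNormRpow p (-1) ξ) := by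
  have hwξ : w ξ ≠ ∞ := by
    have h_le : w ξ ≤ C * expNormRpow p k ξ * w 0 := by simpa only [add_zero] using hw ξ 0
    exact ne_top_of_le_ne_top
      (ENNReal.mul_ne_top (ENNReal.mul_ne_top hC ENNReal.ofReal_ne_top) hw0) h_le
  rw [lconvolution_def, lconvolution_def, ← lintegral_mul_const' _ _ hwξ]
  refine (lintegral_mono fun η =>
    lconvolution_integrand_mul_weight_le hp hk hδ hkN hδN hw hg hu hgap hξ η).trans_eq ?_
  rw [lintegral_const_mul' _ _ (ENNReal.mul_ne_top hD hC)]
  simp_rw [mul_add (expNormRpow p (-1) _)]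
  rw [lintegral_add_right _ (measurable_expNormRpow.mul_const _),
    lintegral_mul_const _ measurable_expNormRpow, mul_assoc (∫⁻ η, _ ∂μ)]

variable [NormedSpace ℝ E] [FiniteDimensional ℝ E] [μ.IsAddHaarMeasure] {r q : ℝ≥0∞}

theorem eLpNorm_lconvolution_mul_weight_lt_top (hr : 1 ≤ r) (hrq : r ≤ q) (hp : 0 < p) (hk : 0 ≤ k)
    (hδ : 0 < δ) (hgap : ∀ ξ ∈ Γ₀, ∀ ζ ∉ Γ, δ * ‖ξ‖ ≤ ‖ξ - ζ‖) (hΓ : MeasurableSet Γ)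
    (hw_meas : Measurable w) (hw0 : w 0 ≠ ∞) (hC : C ≠ ∞)
    (hw : ∀ x y, w (x + y) ≤ C * expNormRpow p k x * w y) (hg_meas : Measurable g)
    (hg : ∀ N > 0, ∃ D ≠ ∞, ∀ η, g η ≤ D * expNormRpow p (-N) η) (hu_meas : Measurable u)
    (hM : M ≠ ∞) (hu : ∀ ζ, u ζ ≤ M)
    (huw : eLpNorm (fun ζ => u ζ * w ζ) r (μ.restrict Γ) < ∞) :
    eLpNorm (fun ξ => (g ⋆ₗ[μ] u) ξ * w ξ) q (μ.restrict Γ₀) < ∞ := by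
  set e : E → ℝ≥0∞ := expNormRpow p (-1)
  set H := Γ.indicator fun ζ => u ζ * w ζ
  have he_meas : Measurable e := measurable_expNormRpow
  have hH_meas : Measurable H := (hu_meas.mul hw_meas).indicator hΓ
  have he_int : ∫⁻ η, e η ∂μ < ∞ := lintegral_expNormRpow_neg_lt_top one_pos hp
  have h_quot : 0 ≤ (k + 1) / δ ^ p := by positivity
  -- This rate absorbs the growth `k` of `w` at `η` and, through the gap, at `ξ`, with one
  -- factor `e` at each point to spare.
  obtain ⟨D, hD, hgD⟩ := hg (1 + k + (k + 1) / δ ^ p) (by positivity)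
  have h_pointwise : ∀ ξ ∈ Γ₀, (g ⋆ₗ[μ] u) ξ * w ξ ≤
      D * C * ((e ⋆ₗ[μ] H) ξ + (∫⁻ η, e η ∂μ) * (M * w 0) * e ξ) := fun ξ hξ =>
    lconvolution_mul_weight_le hp.le hk hδ (by linarith) (by linarith) hw0 hw hC hgD hD hu hgap hξ
  have h_near : eLpNorm (e ⋆ₗ[μ] H) q μ < ∞ :=
    eLpNorm_lconvolution_lt_top hr hrq he_meas.aemeasurable hH_meas.aemeasurable he_int
      (eLpNorm_top_expNormRpow_lt_top (by norm_num))
      (by rwa [eLpNorm_indicator_eq_eLpNorm_restrict hΓ])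
  have h_far : eLpNorm e q μ < ∞ := eLpNorm_expNormRpow_neg_lt_top (hr.trans hrq) one_pos hp
  exact eLpNorm_restrict_lt_top_of_le_mul_add (hr.trans hrq) (by fun_prop) (by fun_prop) he_meas
    (by finiteness) (by finiteness) h_pointwise h_near h_far

end WeightedConvolution

section FourierTransformOfProduct

open FourierTransform

variable {V : Type*} [NormedAddCommGroup V] [InnerProductSpace ℝ V] [MeasurableSpace V]
  [BorelSpace V] [FiniteDimensional ℝ V]

lemma fourier_fourierInv_mul {g f : V → ℂ} (hg : Integrable g) (hf : Integrable f) (ξ : V) :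
    𝓕 (fun x => 𝓕⁻ g x * f x) ξ = ∫ η, g η * 𝓕 f (ξ - η) := by
  have h_flip := VectorFourier.integral_fourierIntegral_smul_eq_flip (μ := volume) (ν := volume)
    (L := -innerₗ V) (f := g) (g := fun x => 𝐞 (-⟪x, ξ⟫) • f x) Real.continuous_fourierChar
    (continuous_inner (𝕜 := ℝ)).neg hg ((Real.fourierIntegral_convergent_iff ξ).2 hf)
  have h_modulation : ∀ η, VectorFourier.fourierIntegral 𝐞 volume (-innerₗ V).flip
      (fun x => 𝐞 (-⟪x, ξ⟫) • f x) η = 𝓕 f (ξ - η) := fun η => by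
    rw [Real.fourier_eq]
    refine integral_congr_ae (.of_forall fun x => ?_)
    simp only [smul_smul, ← AddChar.map_add_eq_mul, inner_sub_right, LinearMap.flip_apply,
      LinearMap.neg_apply, innerₗ_apply_apply]
    rw [real_inner_comm, neg_neg, neg_sub, sub_eq_add_neg]
  calc 𝓕 (fun x => 𝓕⁻ g x * f x) ξ = ∫ x, 𝓕⁻ g x • 𝐞 (-⟪x, ξ⟫) • f x := by
        simp only [Real.fourier_eq, smul_eq_mul, mul_smul_comm]
    _ = ∫ η, g η * 𝓕 f (ξ - η) := h_flip.trans (by simp only [h_modulation, smul_eq_mul])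

lemma fourier_mul_eq_integral_fourier {φ f : V → ℂ} (hφ : Continuous φ) (hφ_int : Integrable φ)
    (hφ_fourier : Integrable (𝓕 φ)) (hf : Integrable f) (ξ : V) :
    𝓕 (fun x => φ x * f x) ξ = ∫ η, 𝓕 φ η * 𝓕 f (ξ - η) := by
  simpa only [hφ.fourierInv_fourier_eq hφ_int hφ_fourier] using
    fourier_fourierInv_mul hφ_fourier hf ξ

variable {f φ : EuclideanSpace ℝ (Fin d) → ℂ}

lemma FT_eq_fourier (f : EuclideanSpace ℝ (Fin d) → ℂ) (ξ : EuclideanSpace ℝ (Fin d)) :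
    FT f ξ = ((2 * Real.pi) ^ (-(d : ℝ) / 2) : ℝ) * 𝓕 f ((2 * Real.pi)⁻¹ • ξ) := by
  rw [FT, Real.fourier_eq']
  congr! 3 with x
  rw [smul_eq_mul, mul_comm, real_inner_smul_right]
  congr 2
  push_cast
  field_simp

lemma continuous_FT (hf : Integrable f) : Continuous (FT f) := by
  have h_fourier : Continuous (𝓕 f) :=
    VectorFourier.fourierIntegral_continuous Real.continuous_fourierChar continuous_inner hf
  simp_rw [funext (FT_eq_fourier f)]
  fun_prop

lemma enorm_FT_le (f : EuclideanSpace ℝ (Fin d) → ℂ) (ξ : EuclideanSpace ℝ (Fin d)) :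
    ‖FT f ξ‖ₑ ≤ ENNReal.ofReal ((2 * Real.pi) ^ (-(d : ℝ) / 2) * ∫ x, ‖f x‖) := by
  rw [← ofReal_norm, FT_eq_fourier, norm_mul, Complex.norm_of_nonneg (by positivity)]
  gcongr
  exact VectorFourier.norm_fourierIntegral_le_integral_norm _ _ _ _ _

lemma FT_mul_eq_integral_FT (hφ : Continuous φ) (hφ_int : Integrable φ)
    (hφ_FT : Integrable (FT φ)) (hf : Integrable f) (ξ : EuclideanSpace ℝ (Fin d)) :
    FT (fun x => φ x * f x) ξ =
      ((2 * Real.pi) ^ (-(d : ℝ) / 2) : ℝ) * ∫ η, FT φ η * FT f (ξ - η) := by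
  set a : ℝ := (2 * Real.pi) ^ (-(d : ℝ) / 2) with ha
  have ha_ne : (a : ℂ) ≠ 0 := by rw [ha]; exact_mod_cast (by positivity)
  have ha_sq : a * a = ((2 * Real.pi) ^ d)⁻¹ := by
    rw [ha, ← Real.rpow_add (by positivity), ← Real.rpow_natCast, ← Real.rpow_neg (by positivity)]
    ring_nf
  have h_fourier : Integrable (𝓕 φ) := by
    refine ((hφ_FT.comp_smul (R := 2 * Real.pi) (by positivity)).const_mul (a : ℂ)⁻¹).congr ?_
    refine .of_forall fun η => ?_
    simp only [FT_eq_fourier, inv_smul_smul₀ Real.two_pi_pos.ne', inv_mul_cancel_left₀ ha_ne, ← ha]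
  have h_rescale : ∫ η, FT φ η * FT f (ξ - η) =
      ∫ η, 𝓕 φ η * 𝓕 f ((2 * Real.pi)⁻¹ • ξ - η) := calc
    _ = (a * a : ℝ) * ∫ η, 𝓕 φ ((2 * Real.pi)⁻¹ • η) *
          𝓕 f ((2 * Real.pi)⁻¹ • ξ - (2 * Real.pi)⁻¹ • η) := by
      simp_rw [FT_eq_fourier, ← ha, smul_sub, ← integral_const_mul]
      congr! 2
      push_cast
      ring
    _ = _ := by
      rw [Measure.integral_comp_inv_smul_of_nonneg volume
        (fun η => 𝓕 φ η * 𝓕 f ((2 * Real.pi)⁻¹ • ξ - η)) Real.two_pi_pos.le,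
        finrank_euclideanSpace_fin, ha_sq, ← Complex.real_smul,
        inv_smul_smul₀ (pow_pos Real.two_pi_pos d).ne']
  rw [FT_eq_fourier, fourier_mul_eq_integral_fourier hφ hφ_int h_fourier hf, h_rescale]

lemma enorm_FT_mul_le (hφ : Continuous φ) (hφ_int : Integrable φ) (hφ_FT : Integrable (FT φ))
    (hf : Integrable f) (ξ : EuclideanSpace ℝ (Fin d)) :
    ‖FT (fun x => φ x * f x) ξ‖ₑ ≤ ENNReal.ofReal ((2 * Real.pi) ^ (-(d : ℝ) / 2)) *
      ((fun η => ‖FT φ η‖ₑ) ⋆ₗ fun ζ => ‖FT f ζ‖ₑ) ξ := by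
  rw [FT_mul_eq_integral_FT hφ hφ_int hφ_FT hf, enorm_mul, ← ofReal_norm,
    Complex.norm_of_nonneg (by positivity)]
  gcongr
  refine (enorm_integral_le_lintegral_enorm _).trans_eq ?_
  simp only [lconvolution_def, enorm_mul, neg_add_eq_sub]

end FourierTransformOfProduct

section FourierLebesgue

variable {p : ℝ} {r q : ℝ≥0∞} {ω : EuclideanSpace ℝ (Fin d) → ℝ}
  {f φ : EuclideanSpace ℝ (Fin d) → ℂ} {Γ₀ Γ : Set (EuclideanSpace ℝ (Fin d))}

lemma IsSAdmissible.exists_le_mul_exp {s : ℝ} (hω : IsSAdmissible s ω) :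
    ∃ C k : ℝ, ∀ x y, ω (x + y) ≤ C * Real.exp (k * ‖x‖ ^ (1 / s)) * ω y := by
  obtain ⟨-, hω_pos, v, -, -, -, -, C₀, k₀, C₁, -, -, hC₁, hv, hωv⟩ := hω
  refine ⟨C₁ * C₀, k₀, fun x y => (hωv x y).trans ?_⟩
  rw [mul_assoc C₁ C₀]
  have := (hω_pos y).le
  gcongr
  exact hv x

lemma integrable_FT_of_le_exp (hp : 0 < p) (hφ_int : Integrable φ) {C : ℝ}
    (hφ_decay : ∀ ξ, ‖FT φ ξ‖ ≤ C * Real.exp (-1 * ‖ξ‖ ^ p)) : Integrable (FT φ) :=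
  ((integrable_exp_neg_mul_norm_rpow one_pos hp).const_mul C).mono'
    (continuous_FT hφ_int).aestronglyMeasurable (.of_forall hφ_decay)

lemma FLSemi_eq_eLpNorm_enorm_mul (f : EuclideanSpace ℝ (Fin d) → ℂ) :
    FLSemi ω r f Γ = eLpNorm (fun ξ => ‖FT f ξ‖ₑ * ‖ω ξ‖ₑ) r (volume.restrict Γ) :=
  eLpNorm_congr_enorm_ae (.of_forall fun ξ => by simp)

lemma enorm_add_le_mul_expNormRpow {k C : ℝ} (hω : ∀ x, 0 ≤ ω x)
    (hω_mod : ∀ x y, ω (x + y) ≤ C * Real.exp (k * ‖x‖ ^ p) * ω y) (x y) :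
    ‖ω (x + y)‖ₑ ≤ ENNReal.ofReal C * expNormRpow p |k| x * ‖ω y‖ₑ := by
  have h_exp : expNormRpow p k x ≤ expNormRpow p |k| x :=
    ENNReal.ofReal_le_ofReal
      (Real.exp_le_exp.2 (mul_le_mul_of_nonneg_right (le_abs_self k) (by positivity)))
  calc ‖ω (x + y)‖ₑ = ENNReal.ofReal (ω (x + y)) := Real.enorm_of_nonneg (hω _)
    _ ≤ ENNReal.ofReal (C * Real.exp (k * ‖x‖ ^ p) * ω y) :=
        ENNReal.ofReal_le_ofReal (hω_mod x y)
    _ = ENNReal.ofReal C * expNormRpow p k x * ‖ω y‖ₑ := by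
        rw [ENNReal.ofReal_mul' (hω y), ENNReal.ofReal_mul' (Real.exp_pos _).le,
          Real.enorm_of_nonneg (hω y), expNormRpow]
    _ ≤ ENNReal.ofReal C * expNormRpow p |k| x * ‖ω y‖ₑ := by gcongr

theorem stmt2_general (hp : 0 < p) (hr : 1 ≤ r) (hrq : r ≤ q)
    (hω_meas : Measurable ω) (hω : ∀ ξ, 0 ≤ ω ξ)
    (hω_mod : ∃ C k : ℝ, ∀ x y, ω (x + y) ≤ C * Real.exp (k * ‖x‖ ^ p) * ω y)
    (hf : Integrable f) (hφ : Continuous φ) (hφ_int : Integrable φ)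
    (hφ_decay : ∀ N : ℝ, 0 < N → ∃ C : ℝ, ∀ ξ, ‖FT φ ξ‖ ≤ C * Real.exp (-N * ‖ξ‖ ^ p))
    (hΓ₀ : IsCone Γ₀) (hΓ : IsCone Γ) (hΓo : IsOpen Γ) (hsub : closure Γ₀ \ {0} ⊆ Γ)
    (h : FLSemi ω r f Γ < ∞) :
    FLSemi ω q (fun x => φ x * f x) Γ₀ < ∞ := by
  obtain ⟨C, k, hω_mod⟩ := hω_mod
  obtain ⟨C₁, hφ_decay_one⟩ := hφ_decay 1 one_pos
  have hφ_FT : Integrable (FT φ) := integrable_FT_of_le_exp hp hφ_int hφ_decay_one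
  obtain ⟨δ, hδ, hgap⟩ := exists_mul_norm_le_norm_sub_of_closure_diff_subset hΓ₀.2 hΓ.2 hΓo hsub
  have hφ_enorm : ∀ N > 0, ∃ D ≠ ∞, ∀ η, ‖FT φ η‖ₑ ≤ D * expNormRpow p (-N) η := fun N hN => by
    obtain ⟨D, hφD⟩ := hφ_decay N hN
    exact ⟨ENNReal.ofReal D, ENNReal.ofReal_ne_top, fun η => enorm_le_mul_expNormRpow (hφD η)⟩
  rw [FLSemi_eq_eLpNorm_enorm_mul] at h ⊢
  have h_conv : eLpNorm (fun ξ => ((fun η => ‖FT φ η‖ₑ) ⋆ₗ fun ζ => ‖FT f ζ‖ₑ) ξ * ‖ω ξ‖ₑ) q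
      (volume.restrict Γ₀) < ∞ :=
    eLpNorm_lconvolution_mul_weight_lt_top hr hrq hp (abs_nonneg k) hδ hgap hΓo.measurableSet
      hω_meas.enorm enorm_ne_top ENNReal.ofReal_ne_top (enorm_add_le_mul_expNormRpow hω hω_mod)
      (continuous_FT hφ_int).measurable.enorm hφ_enorm (continuous_FT hf).measurable.enorm
      ENNReal.ofReal_ne_top (enorm_FT_le f) h
  have h_le : ∀ ξ, ‖‖FT (fun x => φ x * f x) ξ‖ₑ * ‖ω ξ‖ₑ‖ₑ ≤
      ((2 * Real.pi) ^ (-(d : ℝ) / 2)).toNNReal *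
        ‖((fun η => ‖FT φ η‖ₑ) ⋆ₗ fun ζ => ‖FT f ζ‖ₑ) ξ * ‖ω ξ‖ₑ‖ₑ := fun ξ => by
    rw [enorm_eq_self, enorm_eq_self, ← mul_assoc]
    gcongr
    exact enorm_FT_mul_le hφ hφ_int hφ_FT hf ξ
  exact (eLpNorm_le_mul_eLpNorm_of_ae_le_mul' (.of_forall h_le) q).trans_lt
    (ENNReal.mul_lt_top ENNReal.coe_lt_top h_conv)

end FourierLebesgue

theorem stmt2 {d : ℕ} (s : ℝ) (hs : 1 < s) (r q : ℝ≥0∞) (hr : 1 ≤ r) (hrq : r ≤ q)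
    (ω : EuclideanSpace ℝ (Fin d) → ℝ) (hω : IsSAdmissible s ω)
    (f : EuclideanSpace ℝ (Fin d) → ℂ) (hf : Integrable f) (hfc : HasCompactSupport f)
    (φ : EuclideanSpace ℝ (Fin d) → ℂ) (hφ : IsSCutoff s φ)
    (Γ₀ Γ : Set (EuclideanSpace ℝ (Fin d)))
    (h₀o : IsOpen Γ₀) (h₀c : IsCone Γ₀) (hΓo : IsOpen Γ) (hΓc : IsCone Γ)
    (hsub : closure Γ₀ \ {0} ⊆ Γ)
    (h : FLSemi ω r f Γ < ∞) :
    FLSemi ω q (fun x => φ x * f x) Γ₀ < ∞ :=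
  stmt2_general (one_div_pos.2 (one_pos.trans hs)) hr hrq hω.1 (fun ξ => (hω.2.1 ξ).le)
    hω.exists_le_mul_exp hf hφ.1.continuous (hφ.1.continuous.integrable_of_hasCompactSupport hφ.2.1)
    (fun N hN => (hφ.2.2 N hN).imp fun _ hC => hC.2) h₀c hΓc hΓo hsub h

end Paper
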